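/- Step-index Weakening: For all step indices n′ ≤ n and every sensitivity environment Σ: (1) if ρ1 ∼_n^Σ ρ2 then ρ1 ∼_{n′}^Σ ρ2; (2) if σ1 ∼_n^Σ σ2 then σ1 ∼_{n′}^Σ σ2; and (3) if ρ1,σ1,e1 ∼_n^Σ ρ2,σ2,e2 then ρ1,σ1,e1 ∼_{n′}^Σ ρ2,σ2,e2. -/

import Mathlib

namespace DDuo

/-! ### Metrics -/

/-- Metrics: `diff` (absolute difference), `disc` (discrete), `bot`, `top`. -/
inductive Metric : Type
  | diff | disc | bot | top
  deriving DecidableEq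

/-- The partial order `⊑` on metrics: the reflexive order generated by
`bot ⊑ diff ⊑ top` and `bot ⊑ disc ⊑ top`. -/
def Metric.le : Metric → Metric → Prop
  | .bot, _ => True
  | _, .top => True
  | .diff, .diff => True
  | .disc, .disc => True
  | _, _ => False

/-- The join `m1 ⊔ m2` of two metrics. -/
def Metric.join : Metric → Metric → Metric
  | .bot, m => m
  | m, .bot => m
  | .diff, .diff => .diff
  | .disc, .disc => .disc
  | _, _ => .top

/-- The distance relation `r1 ∼_m^q r2` on reals, with extended real bound `q`. -/
def DistRel (m : Metric) (q : EReal) (r1 r2 : ℝ) : Prop :=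
  match m with
  | .diff => ((|r1 - r2| : ℝ) : EReal) ≤ q
  | .disc => (r1 = r2 → (0 : EReal) ≤ q) ∧ (r1 ≠ r2 → (1 : EReal) ≤ q)
  | .bot  => (((|r1 - r2| : ℝ) : EReal) ≤ q) ∧
             ((r1 = r2 → (0 : EReal) ≤ q) ∧ (r1 ≠ r2 → (1 : EReal) ≤ q))
  | .top  => (((|r1 - r2| : ℝ) : EReal) ≤ q) ∨
             ((r1 = r2 → (0 : EReal) ≤ q) ∧ (r1 ≠ r2 → (1 : EReal) ≤ q))

/-! ### Sensitivity environments -/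

/-- Sensitive sources are (a countable set, here) natural numbers. -/
abbrev Source : Type := ℕ

/-- A sensitivity environment maps sources to extended reals
(pointwise sum, scalar multiple, zero via the function-space instances). -/
abbrev SensEnv : Type := Source → EReal

/-- Scalar multiple `r • Σ` of a sensitivity environment. -/
noncomputable def SensEnv.smul (r : ℝ) (S : SensEnv) : SensEnv :=
  fun o => (r : EReal) * S o

/-- Dot product `Σ · Σ′ = ∑ₒ Σ(o) · Σ′(o)`. -/
noncomputable def SensEnv.dot (S1 S2 : SensEnv) : EReal :=
  ∑' o, S1 o * S2 o

/-! ### Syntax -/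

abbrev Var : Type := ℕ
abbrev Loc : Type := ℕ

/-- Expressions. -/
inductive Expr : Type
  | var (x : Var)                       -- variables
  | lit (r : ℝ)                         -- real literals
  | plus (e₁ e₂ : Expr)                 -- e + e
  | timesL (e₁ e₂ : Expr)               -- e ⋉ e  (left argument is the scalar)
  | timesR (e₁ e₂ : Expr)               -- e ⋊ e  (right argument is the scalar)
  | if0 (e₁ e₂ e₃ : Expr)               -- if0(e){e}{e}
  | pair (e₁ e₂ : Expr)                 -- ⟨e,e⟩
  | proj (i : Bool) (e : Expr)          -- π_i(e) (true = first, false = second)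
  | lam (x : Var) (e : Expr)            -- λx.e
  | app (e₁ e₂ : Expr)                  -- e(e)
  | ref (e : Expr)                      -- ref(e)
  | readRef (e : Expr)                  -- !e
  | writeRef (e₁ e₂ : Expr)             -- e ← e

/-- Values: tagged reals `r@_m^Σ`, pairs, closures, and locations. -/
inductive Value : Type
  | real (r : ℝ) (S : SensEnv) (m : Metric)
  | pair (v₁ v₂ : Value)
  | closure (x : Var) (e : Expr) (ρ : Var → Option Value)
  | loc (ℓ : Loc)

/-- Value environments: finite maps from variables to values
(represented as partial functions). -/
abbrev Env : Type := Var → Option Value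

/-- Stores: finite maps from locations to values
(represented as partial functions). -/
abbrev Store : Type := Loc → Option Value

/-- Map update `{x ↦ v} ⊎ ρ`. -/
def upd (ρ : Env) (x : Var) (v : Value) : Env :=
  fun y => if y = x then some v else ρ y

/-- Domain of a partial map. -/
def dom (σ : Store) : Set Loc := {ℓ | σ ℓ ≠ none}

/-- The empty map. -/
def emp : Store := fun _ => none

/-! ### Step-indexed big-step semantics -/

/-- The step-indexed big-step judgment `ρ ⊢ σ,e ⇓ₙ σ′,v`, parameterized by the
allocation function `alloc`. -/
inductive Eval (alloc : Set Loc → Loc) :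
    Env → Store → Expr → ℕ → Store → Value → Prop
  | var {ρ : Env} {σ : Store} {x : Var} {v : Value} :
      ρ x = some v →
      Eval alloc ρ σ (.var x) 0 σ v
  | lit {ρ : Env} {σ : Store} {r : ℝ} :
      Eval alloc ρ σ (.lit r) 0 σ (.real r 0 .disc)
  | lam {ρ : Env} {σ : Store} {x : Var} {e : Expr} :
      Eval alloc ρ σ (.lam x e) 0 σ (.closure x e ρ)
  | plus {ρ : Env} {σ σ' σ'' : Store} {e₁ e₂ : Expr} {n₁ n₂ : ℕ}
      {r₁ r₂ : ℝ} {S₁ S₂ : SensEnv} {m₁ m₂ : Metric} :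
      Eval alloc ρ σ e₁ n₁ σ' (.real r₁ S₁ m₁) →
      Eval alloc ρ σ' e₂ n₂ σ'' (.real r₂ S₂ m₂) →
      Eval alloc ρ σ (.plus e₁ e₂) (n₁ + n₂) σ''
        (.real (r₁ + r₂) (S₁ + S₂) (m₁.join m₂))
  | timesL {ρ : Env} {σ σ' σ'' : Store} {e₁ e₂ : Expr} {n₁ n₂ : ℕ}
      {r₁ r₂ : ℝ} {S₂ : SensEnv} {m₁ m₂ : Metric} :
      Eval alloc ρ σ e₁ n₁ σ' (.real r₁ 0 m₁) →
      Eval alloc ρ σ' e₂ n₂ σ'' (.real r₂ S₂ m₂) →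
      Eval alloc ρ σ (.timesL e₁ e₂) (n₁ + n₂) σ''
        (.real (r₁ * r₂) (SensEnv.smul r₁ S₂) m₂)
  | timesR {ρ : Env} {σ σ' σ'' : Store} {e₁ e₂ : Expr} {n₁ n₂ : ℕ}
      {r₁ r₂ : ℝ} {S₁ : SensEnv} {m₁ m₂ : Metric} :
      Eval alloc ρ σ e₁ n₁ σ' (.real r₁ S₁ m₁) →
      Eval alloc ρ σ' e₂ n₂ σ'' (.real r₂ 0 m₂) →
      Eval alloc ρ σ (.timesR e₁ e₂) (n₁ + n₂) σ''
        (.real (r₁ * r₂) (SensEnv.smul r₂ S₁) m₁)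
  | if0T {ρ : Env} {σ σ' σ'' : Store} {e₁ e₂ e₃ : Expr} {n₁ n₂ : ℕ}
      {r₁ : ℝ} {m₁ : Metric} {v₂ : Value} :
      Eval alloc ρ σ e₁ n₁ σ' (.real r₁ 0 m₁) →
      r₁ = 0 →
      Eval alloc ρ σ' e₂ n₂ σ'' v₂ →
      Eval alloc ρ σ (.if0 e₁ e₂ e₃) (n₁ + n₂) σ'' v₂
  | if0F {ρ : Env} {σ σ' σ'' : Store} {e₁ e₂ e₃ : Expr} {n₁ n₂ : ℕ}
      {r₁ : ℝ} {m₁ : Metric} {v₃ : Value} :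
      Eval alloc ρ σ e₁ n₁ σ' (.real r₁ 0 m₁) →
      r₁ ≠ 0 →
      Eval alloc ρ σ' e₃ n₂ σ'' v₃ →
      Eval alloc ρ σ (.if0 e₁ e₂ e₃) (n₁ + n₂) σ'' v₃
  | pair {ρ : Env} {σ σ' σ'' : Store} {e₁ e₂ : Expr} {n₁ n₂ : ℕ} {v₁ v₂ : Value} :
      Eval alloc ρ σ e₁ n₁ σ' v₁ →
      Eval alloc ρ σ' e₂ n₂ σ'' v₂ →
      Eval alloc ρ σ (.pair e₁ e₂) (n₁ + n₂) σ'' (.pair v₁ v₂)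
  | proj {ρ : Env} {σ σ' : Store} {e : Expr} {n : ℕ} {i : Bool} {v₁ v₂ : Value} :
      Eval alloc ρ σ e n σ' (.pair v₁ v₂) →
      Eval alloc ρ σ (.proj i e) n σ' (cond i v₁ v₂)
  | ref {ρ : Env} {σ σ' : Store} {e : Expr} {n : ℕ} {v : Value} :
      Eval alloc ρ σ e n σ' v →
      Eval alloc ρ σ (.ref e) n (upd σ' (alloc (dom σ')) v) (.loc (alloc (dom σ')))
  | readRef {ρ : Env} {σ σ' : Store} {e : Expr} {n : ℕ} {ℓ : Loc} {v : Value} :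
      Eval alloc ρ σ e n σ' (.loc ℓ) →
      σ' ℓ = some v →
      Eval alloc ρ σ (.readRef e) n σ' v
  | writeRef {ρ : Env} {σ σ' σ'' : Store} {e₁ e₂ : Expr} {n₁ n₂ : ℕ}
      {ℓ : Loc} {v : Value} :
      Eval alloc ρ σ e₁ n₁ σ' (.loc ℓ) →
      Eval alloc ρ σ' e₂ n₂ σ'' v →
      Eval alloc ρ σ (.writeRef e₁ e₂) (n₁ + n₂) (upd σ'' ℓ v) v
  | app {ρ ρ' : Env} {σ σ' σ'' σ''' : Store} {e₁ e₂ e : Expr} {n₁ n₂ n₃ : ℕ}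
      {x : Var} {v v' : Value} :
      Eval alloc ρ σ e₁ n₁ σ' (.closure x e ρ') →
      Eval alloc ρ σ' e₂ n₂ σ'' v →
      Eval alloc (upd ρ' x v) σ'' e n₃ σ''' v' →
      Eval alloc ρ σ (.app e₁ e₂) (n₁ + n₂ + n₃ + 1) σ''' v'

/-! ### Step-indexed logical relations -/

mutual
  /-- The step-indexed logical relation on values, `v₁ ∼ₙ^Σ v₂`. -/
  def ValRel (alloc : Set Loc → Loc) : ℕ → SensEnv → Value → Value → Prop
    | _, S, .real r₁ S₁ m₁, .real r₂ S₂ m₂ =>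
        S₁ = S₂ ∧ m₁ = m₂ ∧ DistRel m₁ (SensEnv.dot S S₁) r₁ r₂
    | n, S, .pair v₁₁ v₁₂, .pair v₂₁ v₂₂ =>
        ValRel alloc n S v₁₁ v₂₁ ∧ ValRel alloc n S v₁₂ v₂₂
    | n, S, .closure x₁ e₁ ρ₁, .closure x₂ e₂ ρ₂ =>
        x₁ = x₂ ∧
        ∀ n' < n, ∀ (v₁ v₂ : Value) (σ₁ σ₂ : Store),
          (∀ ℓ ∈ dom σ₁ ∪ dom σ₂, ∃ w₁ w₂,
            σ₁ ℓ = some w₁ ∧ σ₂ ℓ = some w₂ ∧ ValRel alloc n' S w₁ w₂) →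
          ValRel alloc n' S v₁ v₂ →
          ConfigRel alloc n' S (upd ρ₁ x₁ v₁) σ₁ e₁ (upd ρ₂ x₂ v₂) σ₂ e₂
    | _, _, .loc ℓ₁, .loc ℓ₂ => ℓ₁ = ℓ₂
    | _, _, _, _ => False
  termination_by n _ v₁ _ => (n, 1, sizeOf v₁)

  /-- The step-indexed logical relation on configurations,
  `ρ₁,σ₁,e₁ ∼ₙ^Σ ρ₂,σ₂,e₂`. -/
  def ConfigRel (alloc : Set Loc → Loc) :
      ℕ → SensEnv → Env → Store → Expr → Env → Store → Expr → Prop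
    | 0, _, _, _, _, _, _, _ => True
    | n + 1, S, ρ₁, σ₁, e₁, ρ₂, σ₂, e₂ =>
        ∀ n₁ ≤ n, ∀ (n₂ : ℕ) (σ₁' σ₂' : Store) (v₁ v₂ : Value),
          Eval alloc ρ₁ σ₁ e₁ n₁ σ₁' v₁ →
          Eval alloc ρ₂ σ₂ e₂ n₂ σ₂' v₂ →
          n₁ = n₂ ∧
          (∀ ℓ ∈ dom σ₁' ∪ dom σ₂', ∃ w₁ w₂,
            σ₁' ℓ = some w₁ ∧ σ₂' ℓ = some w₂ ∧ ValRel alloc (n - n₁) S w₁ w₂) ∧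
          ValRel alloc (n - n₁) S v₁ v₂
  termination_by n _ _ _ _ _ _ _ => (n, 0, 0)
end

/-- The step-indexed logical relation on stores, `σ₁ ∼ₙ^Σ σ₂`: every location in
the union of the two domains is defined in both stores and the values are
related. -/
def StoreRel (alloc : Set Loc → Loc) (n : ℕ) (S : SensEnv) (σ₁ σ₂ : Store) : Prop :=
  ∀ ℓ ∈ dom σ₁ ∪ dom σ₂, ∃ w₁ w₂,
    σ₁ ℓ = some w₁ ∧ σ₂ ℓ = some w₂ ∧ ValRel alloc n S w₁ w₂

/-- The step-indexed logical relation on value environments, `ρ₁ ∼ₙ^Σ ρ₂`. -/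
def EnvRel (alloc : Set Loc → Loc) (n : ℕ) (S : SensEnv) (ρ₁ ρ₂ : Env) : Prop :=
  ∀ x ∈ dom ρ₁ ∪ dom ρ₂, ∃ w₁ w₂,
    ρ₁ x = some w₁ ∧ ρ₂ x = some w₂ ∧ ValRel alloc n S w₁ w₂

end DDuo

namespace DDuo

/-! Weakening needs no induction on the step index. In a comparison of values the index occurs only
as the bound on `n'` in the closure clause, so lowering it leaves fewer cases to check; structural
recursion carries this through pairs, and the pointwise relations inherit it. In a comparison of
configurations the index also determines the one at which results are compared, which decreases
along with it, so weakening for values and stores finishes the argument. -/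

section

variable {alloc : Set Loc → Loc} {n n' : ℕ} {S : SensEnv}

theorem valRel_real_left_iff {r : ℝ} {T : SensEnv} {m : Metric} {v : Value} :
    ValRel alloc n S (.real r T m) v ↔
      ∃ r', v = .real r' T m ∧ DistRel m (SensEnv.dot S T) r r' := by
  cases v <;> simp [ValRel, and_assoc, eq_comm]

theorem valRel_pair_left_iff {v₁ w₁ v : Value} :
    ValRel alloc n S (.pair v₁ w₁) v ↔
      ∃ v₂ w₂, v = .pair v₂ w₂ ∧ ValRel alloc n S v₁ v₂ ∧ ValRel alloc n S w₁ w₂ := by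
  cases v <;> simp [ValRel]

theorem valRel_closure_left_iff {x : Var} {e₁ : Expr} {ρ₁ : Env} {v : Value} :
    ValRel alloc n S (.closure x e₁ ρ₁) v ↔
      ∃ e₂ ρ₂, v = .closure x e₂ ρ₂ ∧
        ∀ k < n, ∀ (v₁ v₂ : Value) (σ₁ σ₂ : Store),
          StoreRel alloc k S σ₁ σ₂ → ValRel alloc k S v₁ v₂ →
            ConfigRel alloc k S (upd ρ₁ x v₁) σ₁ e₁ (upd ρ₂ x v₂) σ₂ e₂ := by
  cases v with
  | closure y e₂ ρ₂ =>
    rw [ValRel]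
    constructor
    · rintro ⟨rfl, h⟩
      exact ⟨e₂, ρ₂, rfl, h⟩
    · rintro ⟨_, _, ⟨⟩, h⟩
      exact ⟨rfl, h⟩
  | _ => simp [ValRel]

theorem valRel_loc_left_iff {ℓ : Loc} {v : Value} :
    ValRel alloc n S (.loc ℓ) v ↔ v = .loc ℓ := by
  cases v <;> simp [ValRel, eq_comm]

-- Index `0` is the vacuous case of `n₁ < n`, which also keeps `n - 1 - n₁` from truncating.
theorem configRel_iff {ρ₁ ρ₂ : Env} {σ₁ σ₂ : Store} {e₁ e₂ : Expr} :
    ConfigRel alloc n S ρ₁ σ₁ e₁ ρ₂ σ₂ e₂ ↔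
      ∀ n₁ < n, ∀ (n₂ : ℕ) (σ₁' σ₂' : Store) (v₁ v₂ : Value),
        Eval alloc ρ₁ σ₁ e₁ n₁ σ₁' v₁ → Eval alloc ρ₂ σ₂ e₂ n₂ σ₂' v₂ →
          n₁ = n₂ ∧ StoreRel alloc (n - 1 - n₁) S σ₁' σ₂' ∧
            ValRel alloc (n - 1 - n₁) S v₁ v₂ := by
  cases n <;> simp [ConfigRel, StoreRel]

theorem ValRel.of_le (hn : n' ≤ n) :
    ∀ {v₁ v₂ : Value}, ValRel alloc n S v₁ v₂ → ValRel alloc n' S v₁ v₂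
  | .real .., _, h => valRel_real_left_iff.2 (valRel_real_left_iff.1 h)
  | .pair .., _, h =>
    let ⟨v₂, w₂, hv, h₁, h₂⟩ := valRel_pair_left_iff.1 h
    valRel_pair_left_iff.2 ⟨v₂, w₂, hv, h₁.of_le hn, h₂.of_le hn⟩
  | .closure .., _, h =>
    let ⟨e₂, ρ₂, hv, hbody⟩ := valRel_closure_left_iff.1 h
    valRel_closure_left_iff.2 ⟨e₂, ρ₂, hv, fun k hk => hbody k (hk.trans_le hn)⟩
  | .loc .., _, h => valRel_loc_left_iff.2 (valRel_loc_left_iff.1 h)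

theorem StoreRel.of_le {σ₁ σ₂ : Store} (hn : n' ≤ n) (h : StoreRel alloc n S σ₁ σ₂) :
    StoreRel alloc n' S σ₁ σ₂ := fun ℓ hℓ =>
  let ⟨w₁, w₂, h₁, h₂, hw⟩ := h ℓ hℓ
  ⟨w₁, w₂, h₁, h₂, hw.of_le hn⟩

theorem EnvRel.of_le {ρ₁ ρ₂ : Env} (hn : n' ≤ n) (h : EnvRel alloc n S ρ₁ ρ₂) :
    EnvRel alloc n' S ρ₁ ρ₂ := fun x hx =>
  let ⟨w₁, w₂, h₁, h₂, hw⟩ := h x hx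
  ⟨w₁, w₂, h₁, h₂, hw.of_le hn⟩

theorem ConfigRel.of_le {ρ₁ ρ₂ : Env} {σ₁ σ₂ : Store} {e₁ e₂ : Expr} (hn : n' ≤ n)
    (h : ConfigRel alloc n S ρ₁ σ₁ e₁ ρ₂ σ₂ e₂) :
    ConfigRel alloc n' S ρ₁ σ₁ e₁ ρ₂ σ₂ e₂ := by
  rw [configRel_iff] at h ⊢
  intro n₁ hn₁ n₂ σ₁' σ₂' v₁ v₂ eval₁ eval₂
  have hres : n' - 1 - n₁ ≤ n - 1 - n₁ := by gcongr
  obtain ⟨hsteps, hstore, hval⟩ := h n₁ (hn₁.trans_le hn) n₂ σ₁' σ₂' v₁ v₂ eval₁ eval₂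
  exact ⟨hsteps, hstore.of_le hres, hval.of_le hres⟩

end

/-- **Step-index Weakening**: for all step indices `n′ ≤ n` and every
sensitivity environment `Σ`: (1) if `ρ₁ ∼ₙ^Σ ρ₂` then `ρ₁ ∼_{n′}^Σ ρ₂`;
(2) if `σ₁ ∼ₙ^Σ σ₂` then `σ₁ ∼_{n′}^Σ σ₂`; and (3) if
`ρ₁,σ₁,e₁ ∼ₙ^Σ ρ₂,σ₂,e₂` then `ρ₁,σ₁,e₁ ∼_{n′}^Σ ρ₂,σ₂,e₂`. -/
theorem step_index_weakening
    (alloc : Set Loc → Loc) (n' n : ℕ) (hn : n' ≤ n) (S : SensEnv) :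
    (∀ ρ₁ ρ₂ : Env, EnvRel alloc n S ρ₁ ρ₂ → EnvRel alloc n' S ρ₁ ρ₂) ∧
    (∀ σ₁ σ₂ : Store, StoreRel alloc n S σ₁ σ₂ → StoreRel alloc n' S σ₁ σ₂) ∧
    (∀ (ρ₁ ρ₂ : Env) (σ₁ σ₂ : Store) (e₁ e₂ : Expr),
      ConfigRel alloc n S ρ₁ σ₁ e₁ ρ₂ σ₂ e₂ →
      ConfigRel alloc n' S ρ₁ σ₁ e₁ ρ₂ σ₂ e₂) :=
  ⟨fun _ _ => EnvRel.of_le hn, fun _ _ => StoreRel.of_le hn, fun _ _ _ _ _ _ => ConfigRel.of_le hn⟩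

end DDuo
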